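/- arXiv:2303.08368 — 2 statements merged into one kernel-verified Lean document; each statement's English description precedes it below -/
import Mathlib

section
/- For every integer K ≥ 1, all real phases ε_1,…,ε_K, and every k ∈ {1,…,K}, the vector E(ε_1,…,ε_K) ∈ ℂ^{K+1} is orthogonal to the steering vector of the k-th source: a(ε_k)^† E(ε_1,…,ε_K) = 0. -/
/-!
The entries of `E(η_1,…,η_m)` are the coefficients of the polynomial `∏_p (1 − exp(j·η_p)·z)`:
appending a zero leaves the polynomial unchanged and prepending one multiplies it by `z`, so each
step of the recursion contributes one linear factor. Pairing with `a(ε)` evaluates the polynomial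
at `z = exp(−j·ε)`, which is a root when `ε` is one of the phases.
-/

open scoped BigOperators

/-- Steering vector `a(ε) ∈ ℂ^{n+1}` with entries `exp(j·i·ε)`, `i = 0,…,n`. -/
noncomputable def steer (n : ℕ) (ε : ℝ) : Fin (n + 1) → ℂ :=
  fun i => Complex.exp (Complex.I * ((i : ℕ) : ℂ) * (ε : ℂ))

/-- The vector `E(η_1,…,η_m) ∈ ℂ^{m+1}` defined recursively by
`E(η_1) = (1, −exp(j·η_1))` and
`E(η_1,…,η_p) = (E(η_1,…,η_{p−1}), 0) − exp(j·η_p)·(0, E(η_1,…,η_{p−1}))`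
(with base case `E() = (1)`, which reproduces the stated base case at `m = 1`). -/
noncomputable def Evec : (m : ℕ) → (Fin m → ℝ) → (Fin (m + 1) → ℂ)
  | 0, _ => fun _ => 1
  | m + 1, η => fun i =>
      Fin.snoc (α := fun _ => ℂ) (Evec m fun j => η j.castSucc) 0 i -
        Complex.exp (Complex.I * (η (Fin.last m) : ℂ)) *
          Fin.cons (α := fun _ => ℂ) 0 (Evec m fun j => η j.castSucc) i

/-- The cyclic down-shift matrix on `ℂ^{n+1}`: `(Lv)_0 = v_n`, `(Lv)_i = v_{i−1}` for `i ≥ 1`. -/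
def Lmat (n : ℕ) : Matrix (Fin (n + 1)) (Fin (n + 1)) ℂ :=
  Matrix.of fun i l => if l = i - 1 then 1 else 0

/-- Kronecker product of vectors: `(v ⊗ w)_{(i,l)} = v_i · w_l`. -/
def kron {a b : Type*} (v : a → ℂ) (w : b → ℂ) : a × b → ℂ :=
  fun p => v p.1 * w p.2

/-- `x^† y = Σ_i conj(x_i) · y_i`. -/
noncomputable def ip {n : Type*} [Fintype n] (x y : n → ℂ) : ℂ :=
  ∑ i, (starRingEnd ℂ) (x i) * y i

/-- `x^† M y = Σ_{i,l} conj(x_i) · M_{i,l} · y_l`. -/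
noncomputable def qf {n : Type*} [Fintype n] (x : n → ℂ) (M : Matrix n n ℂ) (y : n → ℂ) : ℂ :=
  ∑ i, ∑ l, (starRingEnd ℂ) (x i) * M i l * y l

/-- `E(η_1,…,η_Kp) ∈ ℂ^{Kp+1}` padded with a trailing zero, giving a vector in `ℂ^{Kp+2}`. -/
noncomputable def Epad (Kp : ℕ) (η : Fin Kp → ℝ) : Fin (Kp + 2) → ℂ :=
  Fin.snoc (Evec Kp η) 0

/-- `u_0 = Ẽ_tx ⊗ Ẽ_rx`. -/
noncomputable def u0 (Kp : ℕ) (ηt ηr : Fin Kp → ℝ) : Fin (Kp + 2) × Fin (Kp + 2) → ℂ :=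
  kron (Epad Kp ηt) (Epad Kp ηr)

/-- `u_1 = Ẽ_tx ⊗ (L·Ẽ_rx)`. -/
noncomputable def u1 (Kp : ℕ) (ηt ηr : Fin Kp → ℝ) : Fin (Kp + 2) × Fin (Kp + 2) → ℂ :=
  kron (Epad Kp ηt) ((Lmat (Kp + 1)).mulVec (Epad Kp ηr))

/-- `u_2 = (L·Ẽ_tx) ⊗ Ẽ_rx`. -/
noncomputable def u2 (Kp : ℕ) (ηt ηr : Fin Kp → ℝ) : Fin (Kp + 2) × Fin (Kp + 2) → ℂ :=
  kron ((Lmat (Kp + 1)).mulVec (Epad Kp ηt)) (Epad Kp ηr)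

/-- `u_3 = (L·Ẽ_tx) ⊗ (L·Ẽ_rx)`. -/
noncomputable def u3 (Kp : ℕ) (ηt ηr : Fin Kp → ℝ) : Fin (Kp + 2) × Fin (Kp + 2) → ℂ :=
  kron ((Lmat (Kp + 1)).mulVec (Epad Kp ηt)) ((Lmat (Kp + 1)).mulVec (Epad Kp ηr))

/-- The noiseless auto-correlation matrix `R = Σ_{k=1}^K σ_k² A_k A_k^†`, where
`A_k = a(ε_tx,k) ⊗ a(ε_rx,k)` and `σsq k` is the power `σ_k²`. -/
noncomputable def Rmat (K : ℕ) (εtx εrx σsq : Fin K → ℝ) :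
    Matrix (Fin (K + 1) × Fin (K + 1)) (Fin (K + 1) × Fin (K + 1)) ℂ :=
  Matrix.of fun p q => ∑ k, (σsq k : ℂ) *
    kron (steer K (εtx k)) (steer K (εrx k)) p *
    (starRingEnd ℂ) (kron (steer K (εtx k)) (steer K (εrx k)) q)

/-- The rank-one matrix `R_ε = a(ε) a(ε)^† ∈ ℂ^{(Kp+2)×(Kp+2)}`. -/
noncomputable def Rsingle (Kp : ℕ) (ε : ℝ) : Matrix (Fin (Kp + 2)) (Fin (Kp + 2)) ℂ :=
  Matrix.of fun i l => steer (Kp + 1) ε i * (starRingEnd ℂ) (steer (Kp + 1) ε l)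

/-- The iDEA cost `Q_tx(φ) = (u_1 − exp(j·φ)·u_3)^† R (u_1 − exp(j·φ)·u_3)`. -/
noncomputable def Qcost (Kp : ℕ) (εtx εrx σsq : Fin (Kp + 1) → ℝ)
    (ηt ηr : Fin Kp → ℝ) (φ : ℝ) : ℂ :=
  qf (u1 Kp ηt ηr - Complex.exp (Complex.I * (φ : ℂ)) • u3 Kp ηt ηr)
    (Rmat (Kp + 1) εtx εrx σsq)
    (u1 Kp ηt ηr - Complex.exp (Complex.I * (φ : ℂ)) • u3 Kp ηt ηr)

/-- The closed-form value `4^{2K−1} · Σ_k σ_k² sin²((ε_tx,k − φ)/2) ∏_m sin²((ε_tx,k − ε̂_tx,m)/2)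
∏_n sin²((ε_rx,k − ε̂_rx,n)/2)` (here `K = Kp + 1`, so `2K − 1 = 2·Kp + 1`). -/
noncomputable def Ssum (Kp : ℕ) (εtx εrx σsq : Fin (Kp + 1) → ℝ)
    (ηt ηr : Fin Kp → ℝ) (φ : ℝ) : ℝ :=
  (4 : ℝ) ^ (2 * Kp + 1) * ∑ k, σsq k * Real.sin ((εtx k - φ) / 2) ^ 2 *
    (∏ m, Real.sin ((εtx k - ηt m) / 2) ^ 2) *
    (∏ n, Real.sin ((εrx k - ηr n) / 2) ^ 2)

/-- The `k = K` term of `Ssum`, i.e. the lower bound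
`4^{2K−1} · σ_K² sin²((ε_tx,K − φ)/2) ∏_m sin²((ε_tx,K − ε̂_tx,m)/2) ∏_n sin²((ε_rx,K − ε̂_rx,n)/2)`. -/
noncomputable def Slb (Kp : ℕ) (εtx εrx σsq : Fin (Kp + 1) → ℝ)
    (ηt ηr : Fin Kp → ℝ) (φ : ℝ) : ℝ :=
  (4 : ℝ) ^ (2 * Kp + 1) * σsq (Fin.last Kp) *
    Real.sin ((εtx (Fin.last Kp) - φ) / 2) ^ 2 *
    (∏ m, Real.sin ((εtx (Fin.last Kp) - ηt m) / 2) ^ 2) *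
    (∏ n, Real.sin ((εrx (Fin.last Kp) - ηr n) / 2) ^ 2)

section MonomialSums

variable {R : Type*} [Semiring R] {n : ℕ}

theorem sum_pow_mul_snoc_zero (z : R) (v : Fin n → R) :
    ∑ i : Fin (n + 1), z ^ (i : ℕ) * Fin.snoc (α := fun _ => R) v 0 i =
      ∑ i : Fin n, z ^ (i : ℕ) * v i := by
  simp [Fin.sum_univ_castSucc]

theorem sum_pow_mul_cons_zero (z : R) (v : Fin n → R) :
    ∑ i : Fin (n + 1), z ^ (i : ℕ) * Fin.cons (α := fun _ => R) 0 v i =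
      z * ∑ i : Fin n, z ^ (i : ℕ) * v i := by
  simp [Fin.sum_univ_succ, pow_succ', mul_assoc, Finset.mul_sum]

end MonomialSums

theorem conj_steer (n : ℕ) (ε : ℝ) (i : Fin (n + 1)) :
    starRingEnd ℂ (steer n ε i) = Complex.exp (-(Complex.I * ε)) ^ (i : ℕ) := by
  rw [steer, ← Complex.exp_conj, ← Complex.exp_nat_mul]
  congr 1
  simp only [map_mul, Complex.conj_I, map_natCast, Complex.conj_ofReal]
  ring

theorem ip_steer (n : ℕ) (ε : ℝ) (v : Fin (n + 1) → ℂ) :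
    ip (steer n ε) v =
      ∑ i : Fin (n + 1), Complex.exp (-(Complex.I * ε)) ^ (i : ℕ) * v i := by
  simp only [ip, conj_steer]

theorem sum_pow_mul_Evec (m : ℕ) (η : Fin m → ℝ) (z : ℂ) :
    ∑ i : Fin (m + 1), z ^ (i : ℕ) * Evec m η i =
      ∏ p, (1 - Complex.exp (Complex.I * η p) * z) := by
  induction m with
  | zero => simp [Evec]
  | succ m ih =>
    let F : Fin (m + 1) → ℂ := Evec m fun p => η p.castSucc
    let c : ℂ := Complex.exp (Complex.I * η (Fin.last m))
    calc ∑ i : Fin (m + 2), z ^ (i : ℕ) * Evec (m + 1) η i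
        = ∑ i : Fin (m + 2), z ^ (i : ℕ) * Fin.snoc (α := fun _ => ℂ) F 0 i -
            c * ∑ i : Fin (m + 2), z ^ (i : ℕ) * Fin.cons (α := fun _ => ℂ) 0 F i := by
          simp only [Evec, mul_sub, Finset.sum_sub_distrib, Finset.mul_sum, mul_left_comm, F, c]
      _ = (∑ i : Fin (m + 1), z ^ (i : ℕ) * F i) * (1 - c * z) := by
          rw [sum_pow_mul_snoc_zero, sum_pow_mul_cons_zero]
          ring
      _ = ∏ p, (1 - Complex.exp (Complex.I * η p) * z) := by
          rw [Fin.prod_univ_castSucc, ih]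

theorem ip_steer_Evec (m : ℕ) (ε : ℝ) (η : Fin m → ℝ) :
    ip (steer m ε) (Evec m η) =
      ∏ p, (1 - Complex.exp (Complex.I * η p) * Complex.exp (-(Complex.I * ε))) := by
  rw [ip_steer, sum_pow_mul_Evec]

/-- For every integer K ≥ 1, all real phases ε_1,…,ε_K, and every k,
a(ε_k)^† E(ε_1,…,ε_K) = 0. -/
theorem statement2 (K : ℕ) (hK : 1 ≤ K) (ε : Fin K → ℝ) (k : Fin K) :
    ip (steer K (ε k)) (Evec K ε) = 0 := by
  rw [ip_steer_Evec]
  have factor_k_eq_zero :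
      1 - Complex.exp (Complex.I * ε k) * Complex.exp (-(Complex.I * ε k)) = 0 := by
    rw [← Complex.exp_add, add_neg_cancel, Complex.exp_zero, sub_self]
  exact Finset.prod_eq_zero (Finset.mem_univ k) factor_k_eq_zero
end

section
/- Let E_tx,K = E(ε_tx,1,…,ε_tx,K) and E_rx,K = E(ε_rx,1,…,ε_rx,K), both in ℂ^{K+1}. Then u_1 − exp(j·ε_tx,K)·u_3 = E_tx,K ⊗ (L·Ẽ_rx) and u_2 − exp(j·ε_rx,K)·u_3 = (L·Ẽ_tx) ⊗ E_rx,K. -/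
open scoped BigOperators

/-!
Since `L` maps `(v, 0)` to `(0, v)`, the recursion defining `E` reads
`E(η_1,…,η_K) = (1 − exp(j·η_K)·L) Ẽ`. In each identity the two vectors on the left share one
Kronecker factor; pulling it out by bilinearity leaves this expression in the other.
-/

section Kron

variable {a b R : Type*}

theorem sub_kron (v v' : a → ℂ) (w : b → ℂ) : kron (v - v') w = kron v w - kron v' w :=
  funext fun p => sub_mul (v p.1) (v' p.1) (w p.2)

theorem kron_sub (v : a → ℂ) (w w' : b → ℂ) : kron v (w - w') = kron v w - kron v w' :=
  funext fun p => mul_sub (v p.1) (w p.2) (w' p.2)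

theorem smul_kron [SMul R ℂ] [IsScalarTower R ℂ ℂ] (c : R) (v : a → ℂ) (w : b → ℂ) :
    kron (c • v) w = c • kron v w :=
  funext fun p => smul_mul_assoc c (v p.1) (w p.2)

theorem kron_smul [SMul R ℂ] [SMulCommClass R ℂ ℂ] (c : R) (v : a → ℂ) (w : b → ℂ) :
    kron v (c • w) = c • kron v w :=
  funext fun p => mul_smul_comm c (v p.1) (w p.2)

end Kron

theorem Lmat_mulVec_apply {n : ℕ} (v : Fin (n + 1) → ℂ) (i : Fin (n + 1)) :
    (Lmat n).mulVec v i = v (i - 1) := by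
  simp [Lmat, Matrix.mulVec, dotProduct]

theorem Lmat_mulVec_snoc {n : ℕ} (v : Fin n → ℂ) (x : ℂ) :
    (Lmat n).mulVec (Fin.snoc v x) = Fin.cons (α := fun _ => ℂ) x v := by
  funext i
  simp only [Lmat_mulVec_apply, Fin.snoc_eq_cons_rotate, finRotate_apply, sub_add_cancel]

theorem Evec_succ (m : ℕ) (η : Fin (m + 1) → ℝ) :
    Evec (m + 1) η = Epad m (fun i => η i.castSucc) -
      Complex.exp (Complex.I * (η (Fin.last m) : ℂ)) •
        (Lmat (m + 1)).mulVec (Epad m fun i => η i.castSucc) := by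
  rw [Epad, Lmat_mulVec_snoc]
  rfl

/-- u_1 − exp(j·ε_tx,K)·u_3 = E_tx,K ⊗ (L·Ẽ_rx) and
u_2 − exp(j·ε_rx,K)·u_3 = (L·Ẽ_tx) ⊗ E_rx,K. -/
theorem statement5 (Kp : ℕ) (hKp : 1 ≤ Kp) (εtx εrx : Fin (Kp + 1) → ℝ) :
    u1 Kp (fun i => εtx i.castSucc) (fun i => εrx i.castSucc) - Complex.exp (Complex.I * (εtx (Fin.last Kp) : ℂ)) • u3 Kp (fun i => εtx i.castSucc) (fun i => εrx i.castSucc) =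
      kron (Evec (Kp + 1) εtx) ((Lmat (Kp + 1)).mulVec (Epad Kp (fun i => εrx i.castSucc))) ∧
    u2 Kp (fun i => εtx i.castSucc) (fun i => εrx i.castSucc) - Complex.exp (Complex.I * (εrx (Fin.last Kp) : ℂ)) • u3 Kp (fun i => εtx i.castSucc) (fun i => εrx i.castSucc) =
      kron ((Lmat (Kp + 1)).mulVec (Epad Kp (fun i => εtx i.castSucc))) (Evec (Kp + 1) εrx) := by
  constructor
  · rw [u1, u3, ← smul_kron, ← sub_kron, ← Evec_succ]
  · rw [u2, u3, ← kron_smul, ← kron_sub, ← Evec_succ]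
end
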